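/- The map γ sending a point z₀ ∈ D to the evaluation character δ_{z₀} (where δ_{z₀}(f) = f(z₀)) is a homeomorphism from D onto the set M of all continuous unital ℂ-algebra homomorphisms A(D) → ℂ, where M carries the topology of pointwise convergence (Gelfand topology): μ_j → μ iff μ_j(f) → μ(f) in ℂ for every f ∈ A(D). -/

import Mathlib

noncomputable section
open Metric MvPolynomial

/-- The closed unit disk `D ⊆ ℂ`. -/
def Ddisk : Set ℂ := Metric.closedBall 0 1

instance : CompactSpace Ddisk := isCompact_iff_compactSpace.mp (isCompact_closedBall 0 1)

/-- The disk algebra `A(D)`: continuous functions on the closed unit disk that are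
holomorphic on the open disk. -/
def diskAlg : Subalgebra ℂ C(Ddisk, ℂ) where
  carrier := {f | ∃ F : ℂ → ℂ, DifferentiableOn ℂ F (Metric.ball (0 : ℂ) 1) ∧ ∀ z : Ddisk, f z = F z}
  mul_mem' := by
    rintro f g ⟨F, hF, hf⟩ ⟨G, hG, hg⟩
    exact ⟨F * G, hF.mul hG, fun z => by simp [hf z, hg z]⟩
  add_mem' := by
    rintro f g ⟨F, hF, hf⟩ ⟨G, hG, hg⟩
    exact ⟨F + G, hF.add hG, fun z => by simp [hf z, hg z]⟩
  algebraMap_mem' := by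
    intro c
    exact ⟨fun _ => c, differentiableOn_const c, fun z => by simp⟩

/-- The Gelfand spectrum `M` of the disk algebra: the set of continuous unital
`ℂ`-algebra homomorphisms `A(D) → ℂ`, with the topology of pointwise convergence
(as a subspace of the product `A(D) → ℂ`). -/
abbrev Mchar : Type := {μ : ↥diskAlg → ℂ // Continuous μ ∧ ∃ ν : ↥diskAlg →ₐ[ℂ] ℂ, ⇑ν = μ}

/-!
A function in `A(D)` without zeros is invertible in `A(D)`, so a character `ν`, continuous or not,
takes on each `f` a value of `f`. For the coordinate function this value is some `w ∈ D`, and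
`ν = δ_w`:

* if `|w| < 1`, then `f - f(w)` is divisible by `z - w`, which `ν` kills;
* if `|w| = 1` and `g = f - ν(f)` had `g(w) ≠ 0`, then `ν` would kill
  `g / g(w) + K (1 - conj w * z)` for every `K`. The real part of `1 - conj w * z` is positive on
  `D` except at `z = w`, so for large `K` this function has positive real part and no zero.

The map `z₀ ↦ δ_{z₀}` is thus a continuous bijection from a compact space to a Hausdorff one.
-/

open Topology ComplexConjugate

theorem exists_forall_add_mul_pos {X : Type*} [TopologicalSpace X] [CompactSpace X] {u v : X → ℝ}
    (hu : Continuous u) (hv : Continuous v) (hv_nonneg : ∀ x, 0 ≤ v x)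
    (hu_pos : ∀ x, v x = 0 → 0 < u x) : ∃ K : ℝ, ∀ x, 0 < u x + K * v x := by
  have hv_pos : ∀ x ∈ {x | u x ≤ 0}, 0 < v x := fun x hx =>
    (hv_nonneg x).lt_of_ne' fun h => (hu_pos x h).not_ge hx
  have hcompact : IsCompact {x | u x ≤ 0} := (isClosed_le hu continuous_const).isCompact
  obtain ⟨C, hC⟩ := hcompact.bddAbove_image
    (hu.neg.continuousOn.div hv.continuousOn fun x hx => (hv_pos x hx).ne')
  refine ⟨max C 0 + 1, fun x => ?_⟩
  rcases le_or_gt (u x) 0 with hx | hx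
  · have hle : -u x ≤ C * v x := (div_le_iff₀ (hv_pos x hx)).1 (hC ⟨x, hx, rfl⟩)
    have hmax : C * v x ≤ max C 0 * v x :=
      mul_le_mul_of_nonneg_right (le_max_left C 0) (hv_nonneg x)
    linarith [hv_pos x hx]
  · have hvx := hv_nonneg x
    positivity

theorem norm_sub_sq_le_two_mul_re_one_sub_conj_mul {z w : ℂ} (hz : ‖z‖ ≤ 1) (hw : ‖w‖ ≤ 1) :
    ‖z - w‖ ^ 2 ≤ 2 * (1 - conj w * z).re := by
  have hz_sq : ‖z‖ ^ 2 ≤ 1 := pow_le_one₀ (norm_nonneg z) hz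
  have hw_sq : ‖w‖ ^ 2 ≤ 1 := pow_le_one₀ (norm_nonneg w) hw
  rw [Complex.sq_norm, Complex.normSq_apply] at *
  simp only [Complex.sub_re, Complex.sub_im, Complex.one_re, Complex.mul_re, Complex.conj_re,
    Complex.conj_im]
  linarith

theorem exists_forall_div_add_mul_ne_zero {w : Ddisk} (hw : ‖(w : ℂ)‖ = 1) {g : C(Ddisk, ℂ)}
    (hg : g w ≠ 0) : ∃ K : ℝ, ∀ z : Ddisk, g z / g w + K * (1 - conj (w : ℂ) * z) ≠ 0 := by
  have hbound (z : Ddisk) := norm_sub_sq_le_two_mul_re_one_sub_conj_mul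
    (mem_closedBall_zero_iff.1 z.2) hw.le
  have heq (z : Ddisk) (hz : (1 - conj (w : ℂ) * z).re = 0) : z = w := by
    have hsq : ‖(z : ℂ) - w‖ ^ 2 = 0 := le_antisymm (by linarith [hbound z]) (sq_nonneg _)
    exact Subtype.ext <| sub_eq_zero.1 <| norm_eq_zero.1 <| sq_eq_zero_iff.1 hsq
  obtain ⟨K, hK⟩ := exists_forall_add_mul_pos
    (u := fun z : Ddisk => (g z / g w).re) (v := fun z : Ddisk => (1 - conj (w : ℂ) * z).re)
    (by fun_prop) (by fun_prop) (fun z => by linarith [hbound z, sq_nonneg ‖(z : ℂ) - w‖])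
    (fun z hz => by simp [heq z hz, div_self hg])
  refine ⟨K, fun z hz => (hK z).ne' ?_⟩
  simpa only [Complex.add_re, Complex.re_ofReal_mul, Complex.zero_re] using congrArg Complex.re hz

namespace diskAlg

/-- The coordinate function `z ↦ z` of the disk algebra. -/
def coord : ↥diskAlg :=
  ⟨⟨fun z => z, continuous_subtype_val⟩, id, differentiableOn_id, fun _ => rfl⟩

/-- The evaluation character `δ_z : f ↦ f(z)` of the disk algebra. -/
def eval (z : Ddisk) : ↥diskAlg →ₐ[ℂ] ℂ :=
  (ContinuousMap.evalAlgHom ℂ ℂ z).comp diskAlg.val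

theorem isUnit_of_forall_ne_zero {f : ↥diskAlg} (hf : ∀ z, (f : C(Ddisk, ℂ)) z ≠ 0) :
    IsUnit f := by
  obtain ⟨F, hF, hfF⟩ := f.2
  have hF_ne : ∀ z ∈ ball (0 : ℂ) 1, F z ≠ 0 := fun z hz =>
    hfF ⟨z, ball_subset_closedBall hz⟩ ▸ hf _
  let inverse : ↥diskAlg :=
    ⟨⟨fun z => ((f : C(Ddisk, ℂ)) z)⁻¹, (f : C(Ddisk, ℂ)).continuous.inv₀ hf⟩,
      F⁻¹, hF.inv hF_ne, fun z => congrArg (·⁻¹) (hfF z)⟩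
  exact .of_mul_eq_one inverse <| Subtype.ext <| ContinuousMap.ext fun z => mul_inv_cancel₀ (hf z)

theorem spectrum_eq_range (f : ↥diskAlg) : spectrum ℂ f = Set.range (f : C(Ddisk, ℂ)) := by
  refine Set.Subset.antisymm (fun c hc => ?_) ?_
  · by_contra hrange
    exact hc <| isUnit_of_forall_ne_zero fun z hz => hrange ⟨z, (sub_eq_zero.1 hz).symm⟩
  · rintro _ ⟨z, rfl⟩
    exact AlgHom.apply_mem_spectrum (eval z) f

theorem algHom_apply_mem_range (ν : ↥diskAlg →ₐ[ℂ] ℂ) (f : ↥diskAlg) :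
    ν f ∈ Set.range (f : C(Ddisk, ℂ)) :=
  spectrum_eq_range f ▸ AlgHom.apply_mem_spectrum ν f

theorem coord_sub_dvd_sub {w : Ddisk} (hw : ‖(w : ℂ)‖ < 1) (f : ↥diskAlg) :
    coord - algebraMap ℂ _ (w : ℂ) ∣ f - algebraMap ℂ _ ((f : C(Ddisk, ℂ)) w) := by
  obtain ⟨F, hF, hfF⟩ := f.2
  have hball : ball (0 : ℂ) 1 ∈ 𝓝 (w : ℂ) := isOpen_ball.mem_nhds (mem_ball_zero_iff.2 hw)
  have hF_cont : ContinuousOn F Ddisk :=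
    continuousOn_iff_continuous_domRestrict.2 <| (f : C(Ddisk, ℂ)).continuous.congr hfF
  have hslope_cont : ContinuousOn (dslope F w) Ddisk :=
    (continuousOn_dslope (Filter.mem_of_superset hball ball_subset_closedBall)).2
      ⟨hF_cont, hF.differentiableAt hball⟩
  have hslope_diff : DifferentiableOn ℂ (dslope F w) (ball 0 1) :=
    (Complex.differentiableOn_dslope hball).2 hF
  refine ⟨⟨⟨fun z => dslope F w z, hslope_cont.domRestrict⟩, _, hslope_diff, fun _ => rfl⟩,
    Subtype.ext <| ContinuousMap.ext fun z => ?_⟩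
  change (f : C(Ddisk, ℂ)) z - (f : C(Ddisk, ℂ)) w = ((z : ℂ) - w) * dslope F w z
  rw [hfF, hfF, ← smul_eq_mul, sub_smul_dslope]

variable {ν : ↥diskAlg →ₐ[ℂ] ℂ} {w : Ddisk}

theorem algHom_apply_eq_of_norm_lt_one (hν : ν coord = w) (hw : ‖(w : ℂ)‖ < 1) (f : ↥diskAlg) :
    ν f = (f : C(Ddisk, ℂ)) w := by
  have hdvd := map_dvd ν (coord_sub_dvd_sub hw f)
  rwa [map_sub, map_sub, AlgHom.commutes, AlgHom.commutes, hν, Algebra.algebraMap_self_apply,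
    sub_self, zero_dvd_iff, Algebra.algebraMap_self_apply, sub_eq_zero] at hdvd

theorem one_sub_conj_mul_coord_mem_ker (hν : ν coord = w) (hw : ‖(w : ℂ)‖ = 1) :
    1 - algebraMap ℂ _ (conj (w : ℂ)) * coord ∈ RingHom.ker ν := by
  rw [RingHom.mem_ker, map_sub, map_one, map_mul, AlgHom.commutes, hν,
    Algebra.algebraMap_self_apply, Complex.conj_mul', hw]
  norm_num

theorem apply_eq_zero_of_mem_ker (hν : ν coord = w) (hw : ‖(w : ℂ)‖ = 1) {g : ↥diskAlg}
    (hg : g ∈ RingHom.ker ν) : (g : C(Ddisk, ℂ)) w = 0 := by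
  by_contra hgw
  obtain ⟨K, hK⟩ := exists_forall_div_add_mul_ne_zero hw hgw
  have hker : algebraMap ℂ _ ((g : C(Ddisk, ℂ)) w)⁻¹ * g +
      algebraMap ℂ _ (K : ℂ) * (1 - algebraMap ℂ _ (conj (w : ℂ)) * coord) ∈ RingHom.ker ν :=
    add_mem (Ideal.mul_mem_left _ _ hg)
      (Ideal.mul_mem_left _ _ (one_sub_conj_mul_coord_mem_ker hν hw))
  obtain ⟨z, hz⟩ := (RingHom.mem_ker.1 hker) ▸ algHom_apply_mem_range ν _
  apply hK z
  rwa [div_eq_inv_mul]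

theorem algHom_apply_eq_of_norm_eq_one (hν : ν coord = w) (hw : ‖(w : ℂ)‖ = 1) (f : ↥diskAlg) :
    ν f = (f : C(Ddisk, ℂ)) w := by
  have hker : f - algebraMap ℂ _ (ν f) ∈ RingHom.ker ν := by
    rw [RingHom.mem_ker, map_sub, AlgHom.commutes, Algebra.algebraMap_self_apply, sub_self]
  exact (sub_eq_zero.1 (apply_eq_zero_of_mem_ker hν hw hker)).symm

theorem algHom_eq_eval (hν : ν coord = w) : ν = eval w := by
  ext f
  rcases (mem_closedBall_zero_iff.1 w.2).lt_or_eq with hw | hw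
  · exact algHom_apply_eq_of_norm_lt_one hν hw f
  · exact algHom_apply_eq_of_norm_eq_one hν hw f

theorem eval_surjective : Function.Surjective eval := fun ν =>
  let ⟨w, hw⟩ := algHom_apply_mem_range ν coord
  ⟨w, (algHom_eq_eval hw.symm).symm⟩

theorem continuous_algHom (ν : ↥diskAlg →ₐ[ℂ] ℂ) : Continuous ν := by
  obtain ⟨w, rfl⟩ := eval_surjective ν
  exact (continuous_eval_const (F := C(Ddisk, ℂ)) w).comp continuous_subtype_val

theorem setOf_exists_algHom_eq :
    {μ : ↥diskAlg → ℂ | ∃ ν : ↥diskAlg →ₐ[ℂ] ℂ, ⇑ν = μ} =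
      {μ | Continuous μ ∧ ∃ ν : ↥diskAlg →ₐ[ℂ] ℂ, ⇑ν = μ} :=
  Set.ext fun _ => ⟨fun ⟨ν, hν⟩ => ⟨hν ▸ continuous_algHom ν, ν, hν⟩, And.right⟩

theorem isClosedEmbedding_eval : IsClosedEmbedding fun z : Ddisk => (eval z : ↥diskAlg → ℂ) := by
  have hcont : Continuous fun z : Ddisk => (eval z : ↥diskAlg → ℂ) :=
    continuous_pi fun f => (f : C(Ddisk, ℂ)).continuous
  have hinj : Function.Injective fun z : Ddisk => (eval z : ↥diskAlg → ℂ) := fun _ _ h =>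
    Subtype.ext (congrFun h coord)
  exact hcont.isClosedEmbedding hinj

end diskAlg

theorem disk_homeomorphic_to_spectrum_general :
    ∃ h : ↥Ddisk ≃ₜ {μ : ↥diskAlg → ℂ // ∃ ν : ↥diskAlg →ₐ[ℂ] ℂ, ⇑ν = μ},
      ∀ (z₀ : ↥Ddisk) (f : ↥diskAlg), (h z₀).1 f = (f : C(Ddisk, ℂ)) z₀ :=
  ⟨diskAlg.isClosedEmbedding_eval.isEmbedding.toHomeomorph.trans
    (.setCongr (diskAlg.eval_surjective.range_comp DFunLike.coe)), fun _ _ => rfl⟩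

/-- The map `z₀ ↦ δ_{z₀}` is a homeomorphism of the closed disk `D` onto the spectrum
`M` of the disk algebra: `M ≅ D`. -/
theorem disk_homeomorphic_to_spectrum :
    ∃ h : ↥Ddisk ≃ₜ Mchar,
      ∀ (z₀ : ↥Ddisk) (f : ↥diskAlg), (h z₀).1 f = (f : C(Ddisk, ℂ)) z₀ := by
  obtain ⟨h, h_apply⟩ := disk_homeomorphic_to_spectrum_general
  exact ⟨h.trans (.setCongr diskAlg.setOf_exists_algHom_eq), h_apply⟩
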